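/- arXiv:1706.09198 — 2 statements merged into one kernel-verified Lean document; each statement's English description precedes it below -/
import Mathlib

section
/- Let q ≥ 2 be an even integer, λ₁, λ₂ > 0, and let (f_n), (g_n) be sequences of symmetric functions in L²(ℝ₊^q) such that ⟨f_n, f_n⟩ → λ₁, ⟨g_n, g_n⟩ → λ₂, ⟨f_n, g_n⟩ → 0, and ‖g_n ⌢_{q/2} g_n − g_n‖ → 0 as n → ∞. Then the sequence ‖f_n ⌢_{q/2} g_n‖² + 2 Re⟨f_n ⌢_{q/2} g_n, g_n⟩ + Σ_{1 ≤ r ≤ q−1, r ≠ q/2} ‖f_n ⌢_r g_n‖² converges to 0 as n → ∞ if and only if ‖f_n ⌢_r g_n‖ → 0 for every r = 1, 2, …, q−1. -/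
open MeasureTheory Filter Topology

noncomputable section

/-- The positive orthant `ℝ₊ⁿ` inside `ℝⁿ`. -/
def posOrthant (n : ℕ) : Set (Fin n → ℝ) := {x | ∀ i, 0 ≤ x i}

/-- Lebesgue measure restricted to the positive orthant; the measure underlying `L²(ℝ₊ⁿ)`. -/
def μpos (n : ℕ) : MeasureTheory.Measure (Fin n → ℝ) :=
  MeasureTheory.volume.restrict (posOrthant n)

/-- Total extension of a finite tuple, giving the junk value `0` out of range. -/
def pad {k : ℕ} (t : Fin k → ℝ) (i : ℕ) : ℝ := if h : i < k then t ⟨i, h⟩ else 0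

/-- The `L²` inner product `⟨f, g⟩ = ∫ f ⬝ conj g` over the positive orthant. -/
def L2inner (n : ℕ) (f g : (Fin n → ℝ) → ℂ) : ℂ :=
  ∫ x, f x * (starRingEnd ℂ) (g x) ∂(μpos n)

/-- The `L²` norm over the positive orthant. -/
def L2norm (n : ℕ) (f : (Fin n → ℝ) → ℂ) : ℝ :=
  Real.sqrt (∫ x, ‖f x‖ ^ 2 ∂(μpos n))

/-- The adjoint `f*(t₁,…,tₙ) = conj (f (tₙ,…,t₁))`. -/
def adjF (n : ℕ) (f : (Fin n → ℝ) → ℂ) : (Fin n → ℝ) → ℂ :=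
  fun t => (starRingEnd ℂ) (f fun i => t i.rev)

/-- `f` is symmetric when `f = f*` a.e. on the positive orthant. -/
def IsSymmFn (n : ℕ) (f : (Fin n → ℝ) → ℂ) : Prop :=
  ∀ᵐ t ∂(μpos n), f t = adjF n f t

/-- Reindexing a multivariate function along an equality of dimensions. -/
def reindex {a b : ℕ} (h : a = b) (F : (Fin a → ℝ) → ℂ) : (Fin b → ℝ) → ℂ :=
  fun t => F fun j => t (Fin.cast h j)

/-- The integrand (in the `s`-variables) of the `p`-th arc contraction
`(f ⌢_p g)(t₁,…,t_{m+n-2p}) = ∫ f(t₁,…,t_{m-p},s_p,…,s₁) g(s₁,…,s_p,t_{m-p+1},…,t_{m+n-2p}) ds`. -/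
def arcKer (m n p : ℕ) (f : (Fin m → ℝ) → ℂ) (g : (Fin n → ℝ) → ℂ)
    (t : Fin (m + n - 2 * p) → ℝ) (s : Fin p → ℝ) : ℂ :=
  f (fun j => if (j : ℕ) < m - p then pad t j else pad s (m - 1 - (j : ℕ))) *
  g (fun j => if (j : ℕ) < p then pad s j else pad t (m + (j : ℕ) - 2 * p))

/-- The `p`-th arc contraction `f ⌢_p g`. -/
def arc (m n p : ℕ) (f : (Fin m → ℝ) → ℂ) (g : (Fin n → ℝ) → ℂ) :
    (Fin (m + n - 2 * p) → ℝ) → ℂ :=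
  fun t => ∫ s in posOrthant p, arcKer m n p f g t s

/-- The integrand of the star contraction of index `(p, p-1)`:
`(f ⋆_p^{p-1} g)(t₁,…,t_{m+n-2p+1})
  = ∫ f(t₁,…,t_{m-p},t_{m-p+1},s_{p-1},…,s₁) g(s₁,…,s_{p-1},t_{m-p+1},…,t_{m+n-2p+1}) ds`. -/
def starKer (m n p : ℕ) (f : (Fin m → ℝ) → ℂ) (g : (Fin n → ℝ) → ℂ)
    (t : Fin (m + n + 1 - 2 * p) → ℝ) (s : Fin (p - 1) → ℝ) : ℂ :=
  f (fun j => if (j : ℕ) < m - p + 1 then pad t j else pad s (m - 1 - (j : ℕ))) *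
  g (fun j => if (j : ℕ) < p - 1 then pad s j else pad t (m + (j : ℕ) + 1 - 2 * p))

/-- The star contraction `f ⋆_p^{p-1} g` of index `(p, p-1)`. -/
def starC (m n p : ℕ) (f : (Fin m → ℝ) → ℂ) (g : (Fin n → ℝ) → ℂ) :
    (Fin (m + n + 1 - 2 * p) → ℝ) → ℂ :=
  fun t => ∫ s in posOrthant (p - 1), starKer m n p f g t s

/-- The `q/2`-th arc contraction of two functions of `q` (even) variables,
expressed again as a function of `q` variables. -/
def contrHalf (q : ℕ) (f g : (Fin q → ℝ) → ℂ) : (Fin q → ℝ) → ℂ :=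
  fun t => ∫ s in posOrthant (q / 2),
    (f fun j => if (j : ℕ) < q - q / 2 then pad t j else pad s (q - 1 - (j : ℕ))) *
    (g fun j => if (j : ℕ) < q / 2 then pad s j else pad t (q + (j : ℕ) - 2 * (q / 2)))

/-- The full contraction `f ⌢_q g = ∫ f(t₁,…,t_q) g(t_q,…,t₁) dt` of two
functions of `q` variables. -/
def fullContr (q : ℕ) (f g : (Fin q → ℝ) → ℂ) : ℂ :=
  ∫ t in posOrthant q, f t * g fun i => t i.rev

/-- A `q`-dimensional square (cube): a product of `q` intervals of equal length. -/
def IsCube (q : ℕ) (S : Set (Fin q → ℝ)) : Prop :=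
  ∃ (a : Fin q → ℝ) (c : ℝ), S = Set.univ.pi fun i => Set.Icc (a i) (a i + c)

/-- One step of the left-bracketed iterated contraction, keeping track of the dimension. -/
def iterStep (q : ℕ) (acc : (d : ℕ) × ((Fin d → ℝ) → ℂ))
    (pr : ℕ × ((Fin q → ℝ) → ℂ)) : (d : ℕ) × ((Fin d → ℝ) → ℂ) :=
  ⟨acc.1 + q - 2 * pr.1, arc acc.1 q pr.1 acc.2 pr.2⟩

/-- The left-bracketed iterated contraction `(⋯((f₀ ⌢_{r₁} f₁) ⌢_{r₂} f₂)⋯) ⌢_{r_k} f_k`. -/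
def iterArc (q : ℕ) (f0 : (Fin q → ℝ) → ℂ) (l : List (ℕ × ((Fin q → ℝ) → ℂ))) :
    (d : ℕ) × ((Fin d → ℝ) → ℂ) :=
  l.foldl (iterStep q) ⟨q, f0⟩

/-- The value of a (`0`-dimensional, i.e. scalar) iterated contraction. -/
def scalarOf (x : (d : ℕ) × ((Fin d → ℝ) → ℂ)) : ℂ := x.2 fun _ => 0


section Abs
variable {α : Type*} [MeasurableSpace α] {μ : Measure α} [SFinite μ]

theorem cs_integral {F G : α → ℂ} (hF : MemLp F 2 μ) (hG : MemLp G 2 μ) :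
    (∫ s, ‖F s‖ * ‖G s‖ ∂μ) ^ 2 ≤ (∫ s, ‖F s‖ ^ 2 ∂μ) * (∫ s, ‖G s‖ ^ 2 ∂μ) := by
  have h := integral_mul_le_Lp_mul_Lq_of_nonneg (μ := μ) (f := fun s => ‖F s‖)
    (g := fun s => ‖G s‖) Real.HolderConjugate.two_two
    (ae_of_all _ fun _ => norm_nonneg _) (ae_of_all _ fun _ => norm_nonneg _)
    (by simpa using hF.norm) (by simpa using hG.norm)
  simp only [Real.rpow_ofNat, ← Real.sqrt_eq_rpow] at h
  have h0 : 0 ≤ ∫ s, ‖F s‖ * ‖G s‖ ∂μ := integral_nonneg fun _ => by positivity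
  calc _ ≤ _ := pow_le_pow_left₀ h0 h 2
    _ = _ := by
      rw [mul_pow, Real.sq_sqrt (integral_nonneg fun _ => by positivity),
        Real.sq_sqrt (integral_nonneg fun _ => by positivity)]

theorem slice_right {F : α × α → ℂ} (hF : MemLp F 2 (μ.prod μ)) :
    ∀ᵐ t ∂μ, MemLp (fun s => F (t, s)) 2 μ := by
  have h1 := ((memLp_two_iff_integrable_sq_norm hF.1).1 hF).prod_right_ae
  filter_upwards [h1, hF.1.prodMk_left] with t h2 h3
  exact (memLp_two_iff_integrable_sq_norm h3).2 h2

theorem slice_left {F : α × α → ℂ} (hF : MemLp F 2 (μ.prod μ)) :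
    ∀ᵐ t ∂μ, MemLp (fun s => F (s, t)) 2 μ :=
  slice_right (F := fun p => F p.swap) (hF.comp_measurePreserving Measure.measurePreserving_swap)

theorem slices {F G : α × α → ℂ} (hF : MemLp F 2 (μ.prod μ)) (hG : MemLp G 2 (μ.prod μ)) :
    ∀ᵐ p ∂(μ.prod μ), MemLp (fun s => F (p.1, s)) 2 μ ∧ MemLp (fun s => G (s, p.2)) 2 μ :=
  (Measure.quasiMeasurePreserving_fst.ae (slice_right hF)).and
    (Measure.quasiMeasurePreserving_snd.ae (slice_left hG))

theorem triple_aesm {F G : α × α → ℂ} (hF : MemLp F 2 (μ.prod μ)) (hG : MemLp G 2 (μ.prod μ)) :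
    AEStronglyMeasurable (fun z : (α × α) × α => F (z.1.1, z.2) * G (z.2, z.1.2))
      ((μ.prod μ).prod μ) := by
  have q1 : Measure.QuasiMeasurePreserving (Prod.map Prod.fst id : (α × α) × α → α × α)
      ((μ.prod μ).prod μ) (μ.prod μ) :=
    QuasiMeasurePreserving.prodMap Measure.quasiMeasurePreserving_fst (.id μ)
  have q2 : Measure.QuasiMeasurePreserving (Prod.map Prod.snd id : (α × α) × α → α × α)
      ((μ.prod μ).prod μ) (μ.prod μ) :=
    QuasiMeasurePreserving.prodMap Measure.quasiMeasurePreserving_snd (.id μ)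
  have q3 := (Measure.measurePreserving_swap (μ := μ) (ν := μ)).quasiMeasurePreserving.comp q2
  exact (hF.1.comp_quasiMeasurePreserving q1).mul (hG.1.comp_quasiMeasurePreserving q3)

theorem contr_norm_memLp {F G : α × α → ℂ} (hF : MemLp F 2 (μ.prod μ))
    (hG : MemLp G 2 (μ.prod μ)) :
    MemLp (fun p : α × α => ∫ s, ‖F (p.1, s) * G (s, p.2)‖ ∂μ) 2 (μ.prod μ) := by
  have hm := (triple_aesm hF hG).norm.integral_prod_right'
  refine (memLp_two_iff_integrable_sq_norm hm).2 ?_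
  have h1 := ((memLp_two_iff_integrable_sq_norm hF.1).1 hF).integral_prod_left
  have h2 := ((memLp_two_iff_integrable_sq_norm hG.1).1 hG).integral_prod_right
  refine (h1.mul_prod h2).mono' (hm.norm.pow 2) ?_
  filter_upwards [slices hF hG] with p hp
  have := cs_integral hp.1 hp.2
  simpa [norm_mul] using this

theorem contr_memLp {F G : α × α → ℂ} (hF : MemLp F 2 (μ.prod μ))
    (hG : MemLp G 2 (μ.prod μ)) :
    MemLp (fun p : α × α => ∫ s, F (p.1, s) * G (s, p.2) ∂μ) 2 (μ.prod μ) := by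
  refine (contr_norm_memLp hF hG).mono (triple_aesm hF hG).integral_prod_right' ?_
  refine ae_of_all _ fun p => ?_
  exact (norm_integral_le_integral_norm _).trans (le_abs_self _)

theorem triple_integrable {F G K : α × α → ℂ} (hF : MemLp F 2 (μ.prod μ))
    (hG : MemLp G 2 (μ.prod μ)) (hK : MemLp K 2 (μ.prod μ)) :
    Integrable (fun z : (α × α) × α => F (z.1.1, z.2) * G (z.2, z.1.2) * K z.1)
      ((μ.prod μ).prod μ) := by
  refine (integrable_prod_iff ((triple_aesm hF hG).mul hK.1.comp_fst)).2 ?_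
  constructor
  · filter_upwards [slices hF hG] with p hp
    exact (hp.1.integrable_mul hp.2).mul_const (K p)
  · have := (contr_norm_memLp hF hG).integrable_mul hK.norm
    refine this.congr (ae_of_all _ fun p => ?_)
    simp only [Pi.mul_apply, ← integral_mul_const, norm_mul]

theorem contr_swap {F G K : α × α → ℂ} (hF : MemLp F 2 (μ.prod μ))
    (hG : MemLp G 2 (μ.prod μ)) (hK : MemLp K 2 (μ.prod μ)) :
    ∫ p, (∫ s, F (p.1, s) * G (s, p.2) ∂μ) * K p ∂(μ.prod μ)
      = ∫ p, F p * (∫ u, G (p.2, u) * K (p.1, u) ∂μ) ∂(μ.prod μ) := by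
  have hi := triple_integrable hF hG hK
  let e : (α × α) × α ≃ᵐ (α × α) × α :=
    MeasurableEquiv.prodAssoc.trans
      (((MeasurableEquiv.refl α).prodCongr MeasurableEquiv.prodComm).trans
        MeasurableEquiv.prodAssoc.symm)
  have he : MeasurePreserving e ((μ.prod μ).prod μ) ((μ.prod μ).prod μ) :=
    (((measurePreserving_prodAssoc μ μ μ).symm).comp
      ((MeasurePreserving.id μ).prod (Measure.measurePreserving_swap (μ := μ) (ν := μ)))).comp
      (measurePreserving_prodAssoc μ μ μ)
  have hi2 := he.integrable_comp_of_integrable hi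
  have h1 := integral_prod _ hi
  have h2 := integral_prod _ hi2
  have h3 := he.integral_comp' (fun z : (α × α) × α => F (z.1.1, z.2) * G (z.2, z.1.2) * K z.1)
  simp only [integral_mul_const] at h1
  rw [← h1, ← h3]
  refine h2.trans ?_
  refine integral_congr_ae (ae_of_all _ fun p => ?_)
  simp only [← integral_const_mul, ← mul_assoc]
  rfl

end Abs

theorem posOrthant_meas (n : ℕ) : MeasurableSet (posOrthant n) := by
  have : posOrthant n = ⋂ i, {x : Fin n → ℝ | 0 ≤ x i} := by
    ext x; simp [posOrthant]
  rw [this]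
  exact MeasurableSet.iInter fun i => measurableSet_le measurable_const (measurable_pi_apply i)

instance (n : ℕ) : SFinite (μpos n) := by unfold μpos; infer_instance

/-- joining map -/
def joinE {h q : ℕ} (e : Fin h ⊕ Fin h ≃ Fin q) :
    (Fin h → ℝ) × (Fin h → ℝ) ≃ᵐ (Fin q → ℝ) :=
  (MeasurableEquiv.sumPiEquivProdPi (fun _ => ℝ)).symm.trans
    (MeasurableEquiv.piCongrLeft (fun _ => ℝ) e)

theorem joinE_apply {h q : ℕ} (e : Fin h ⊕ Fin h ≃ Fin q) (p : (Fin h → ℝ) × (Fin h → ℝ))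
    (i : Fin h ⊕ Fin h) : joinE e p (e i) = Sum.elim p.1 p.2 i := by
  simp only [joinE, MeasurableEquiv.trans_apply, MeasurableEquiv.coe_piCongrLeft]
  rw [Equiv.piCongrLeft_apply_apply]
  cases i <;> rfl

theorem joinE_mp {h q : ℕ} (e : Fin h ⊕ Fin h ≃ Fin q) :
    MeasurePreserving (joinE e) ((μpos h).prod (μpos h)) (μpos q) := by
  have h1 : MeasurePreserving (joinE e) volume volume :=
    (volume_measurePreserving_piCongrLeft (fun _ => ℝ) e).comp
      (volume_measurePreserving_sumPiEquivProdPi_symm (fun _ : Fin h ⊕ Fin h => ℝ))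
  have h2 := h1.restrict_preimage_emb (joinE e).measurableEmbedding (posOrthant q)
  have h3 : joinE e ⁻¹' posOrthant q = posOrthant h ×ˢ posOrthant h := by
    ext p
    simp only [posOrthant, Set.mem_preimage, Set.mem_ofPred_eq, Set.mem_prod]
    rw [← e.forall_congr_right]
    simp [joinE_apply]
  rw [h3, Measure.volume_eq_prod, ← Measure.prod_restrict] at h2
  exact h2

/-- reversal -/
def revE (n : ℕ) : (Fin n → ℝ) ≃ᵐ (Fin n → ℝ) :=
  MeasurableEquiv.piCongrLeft (fun _ => ℝ) Fin.revPerm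

theorem revE_apply (n : ℕ) (x : Fin n → ℝ) (i : Fin n) : revE n x i = x i.rev := by
  obtain ⟨j, rfl⟩ := Fin.revPerm.surjective i
  simp only [revE, MeasurableEquiv.coe_piCongrLeft]
  rw [Equiv.piCongrLeft_apply_apply]
  simp

theorem revE_mp (n : ℕ) : MeasurePreserving (revE n) (μpos n) (μpos n) := by
  have h1 : MeasurePreserving (revE n) volume volume :=
    (volume_measurePreserving_piCongrLeft (fun _ => ℝ) Fin.revPerm)
  have h2 := h1.restrict_preimage_emb (revE n).measurableEmbedding (posOrthant n)
  have h3 : revE n ⁻¹' posOrthant n = posOrthant n := by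
    ext p
    simp only [posOrthant, Set.mem_preimage, Set.mem_ofPred_eq, revE_apply]
    exact ⟨fun h i => by simpa using h i.rev, fun h i => h i.rev⟩
  rw [h3] at h2
  exact h2

/-- straight concatenation -/
def eqA {h q : ℕ} (hq : h + h = q) : Fin h ⊕ Fin h ≃ Fin q :=
  finSumFinEquiv.trans (finCongr hq)

/-- concatenation with second part reversed -/
def eqB {h q : ℕ} (hq : h + h = q) : Fin h ⊕ Fin h ≃ Fin q :=
  (Equiv.sumCongr (Equiv.refl _) Fin.revPerm).trans (eqA hq)

theorem joinA_apply {h q : ℕ} (hq : h + h = q) (t u : Fin h → ℝ) (j : Fin q) :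
    joinE (eqA hq) (t, u) j = if (j : ℕ) < h then pad t j else pad u (j - h) := by
  obtain ⟨i, rfl⟩ := (eqA hq).surjective j
  rw [joinE_apply]
  cases i <;> simp [eqA, pad]

theorem joinB_apply {h q : ℕ} (hq : h + h = q) (t u : Fin h → ℝ) (j : Fin q) :
    joinE (eqB hq) (t, u) j = if (j : ℕ) < h then pad t j else pad u (q - 1 - j) := by
  obtain ⟨i, rfl⟩ := (eqB hq).surjective j
  rw [joinE_apply]
  rcases i with i | i
  · simp [eqA, eqB, pad]
  · have h1 : ((eqB hq (Sum.inr i) : Fin q) : ℕ) = h + (h - (i + 1)) := by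
      simp [eqA, eqB]; omega
    rw [h1, if_neg (by omega), pad, dif_pos (by omega)]
    simp only [Sum.elim_inr]
    congr 1
    ext
    simp
    omega

theorem joinB_rev {h q : ℕ} (hq : h + h = q) (t u : Fin h → ℝ) :
    joinE (eqB hq) (t, revE h u) = joinE (eqA hq) (t, u) := by
  ext j
  rw [joinA_apply, joinB_apply]
  split_ifs with h1
  · rfl
  · rw [pad, pad, dif_pos (by omega), dif_pos (by omega), revE_apply]
    congr 1
    ext
    simp
    omega

theorem rev_joinA {h q : ℕ} (hq : h + h = q) (t u : Fin h → ℝ) :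
    revE q (joinE (eqA hq) (t, u)) = joinE (eqA hq) (revE h u, revE h t) := by
  ext j
  rw [revE_apply, joinA_apply, joinA_apply]
  simp only [Fin.val_rev]
  split_ifs with h1 h2 h2
  · omega
  · rw [pad, pad, dif_pos (by omega), dif_pos (by omega), revE_apply]
    congr 1
    ext
    simp
    omega
  · rw [pad, pad, dif_pos (by omega), dif_pos (by omega), revE_apply]
    congr 1
    ext
    simp
    omega
  · omega

theorem rev_rev (n : ℕ) (x : Fin n → ℝ) : revE n (revE n x) = x := by
  ext; simp [revE_apply]

theorem rev_joinB {h q : ℕ} (hq : h + h = q) (t s : Fin h → ℝ) :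
    revE q (joinE (eqB hq) (t, s)) = joinE (eqA hq) (s, revE h t) := by
  rw [← rev_rev h s, joinB_rev, rev_joinA]

theorem contr_join (q : ℕ) (hq : q / 2 + q / 2 = q) (hr : q + q - 2 * (q / 2) = q)
    (f g : (Fin q → ℝ) → ℂ) (p : (Fin (q / 2) → ℝ) × (Fin (q / 2) → ℝ)) :
    reindex hr (arc q q (q / 2) f g) (joinE (eqA hq) p)
      = ∫ s, f (joinE (eqB hq) (p.1, s)) * g (joinE (eqA hq) (s, p.2)) ∂(μpos (q / 2)) := by
  obtain ⟨t, u⟩ := p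
  unfold reindex arc arcKer μpos
  refine integral_congr_ae (ae_of_all _ fun s => ?_)
  simp only
  congr 2
  · ext j
    rw [joinB_apply]
    by_cases h : (j : ℕ) < q / 2
    · rw [if_pos (by omega), if_pos h, pad, dif_pos (by omega), joinA_apply]
      simp [h]
    · rw [if_neg (by omega), if_neg h]
  · ext j
    rw [joinA_apply]
    by_cases h : (j : ℕ) < q / 2
    · rw [if_pos (by omega), if_pos h]
    · rw [if_neg (by omega), if_neg h, pad, dif_pos (by omega), joinA_apply]
      simp only [Fin.val_cast]
      rw [if_neg (by omega)]
      congr 1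
      omega

theorem contr_memLp_q (q : ℕ) (hq : q / 2 + q / 2 = q) (hr : q + q - 2 * (q / 2) = q)
    {f g : (Fin q → ℝ) → ℂ} (hf : MemLp f 2 (μpos q)) (hg : MemLp g 2 (μpos q)) :
    MemLp (reindex hr (arc q q (q / 2) f g)) 2 (μpos q) := by
  rw [← (joinE_mp (eqA hq)).map_eq, (joinE (eqA hq)).memLp_map_measure_iff]
  have := contr_memLp (hf.comp_measurePreserving (joinE_mp (eqB hq)))
    (hg.comp_measurePreserving (joinE_mp (eqA hq)))
  have h2 : reindex hr (arc q q (q / 2) f g) ∘ joinE (eqA hq) = _ :=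
    funext fun p => contr_join q hq hr f g p
  rw [h2]
  exact this

theorem symm_conj {q : ℕ} {g : (Fin q → ℝ) → ℂ} (hs : IsSymmFn q g) :
    ∀ᵐ x ∂(μpos q), (starRingEnd ℂ) (g x) = g (revE q x) := by
  filter_upwards [hs] with x hx
  rw [hx, adjF, Complex.conj_conj]
  congr 1
  ext i
  rw [revE_apply]

theorem inner_contr (q : ℕ) (hq : q / 2 + q / 2 = q) (hr : q + q - 2 * (q / 2) = q)
    {f g : (Fin q → ℝ) → ℂ} (hf : MemLp f 2 (μpos q)) (hg : MemLp g 2 (μpos q))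
    (hs : IsSymmFn q g) :
    L2inner q (reindex hr (arc q q (q / 2) f g)) g
      = ∫ x, f x * reindex hr (arc q q (q / 2) g g) (revE q x) ∂(μpos q) := by
  have hA := joinE_mp (eqA hq)
  have hB := joinE_mp (eqB hq)
  have hgR := hg.comp_measurePreserving (revE_mp q)
  calc L2inner q (reindex hr (arc q q (q / 2) f g)) g
      = ∫ x, reindex hr (arc q q (q / 2) f g) x * g (revE q x) ∂(μpos q) := by
        refine integral_congr_ae ?_
        filter_upwards [symm_conj hs] with x hx
        rw [hx]
    _ = ∫ p, reindex hr (arc q q (q / 2) f g) (joinE (eqA hq) p)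
          * g (revE q (joinE (eqA hq) p)) ∂((μpos (q/2)).prod (μpos (q/2))) :=
        (hA.integral_comp' _).symm
    _ = _ := by
        simp only [contr_join q hq hr f g]
        exact contr_swap (hf.comp_measurePreserving hB) (hg.comp_measurePreserving hA)
          (hgR.comp_measurePreserving hA)
    _ = ∫ p, f (joinE (eqB hq) p) * reindex hr (arc q q (q / 2) g g)
          (revE q (joinE (eqB hq) p)) ∂((μpos (q/2)).prod (μpos (q/2))) := by
        refine integral_congr_ae (ae_of_all _ fun p => ?_)
        obtain ⟨t, s⟩ := p
        simp only [rev_joinB, contr_join, Function.comp]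
        congr 1
        rw [← (revE_mp (q / 2)).integral_comp' (fun v =>
          g (joinE (eqB hq) (s, v)) * g (joinE (eqA hq) (v, revE (q / 2) t)))]
        simp only [joinB_rev, rev_joinA]
    _ = _ := hB.integral_comp' (fun x => f x * reindex hr (arc q q (q / 2) g g) (revE q x))

theorem cs_norm {q : ℕ} {f g : (Fin q → ℝ) → ℂ} (hf : MemLp f 2 (μpos q))
    (hg : MemLp g 2 (μpos q)) :
    ‖∫ x, f x * g (revE q x) ∂(μpos q)‖ ≤ L2norm q f * L2norm q g := by
  have hgR := hg.comp_measurePreserving (revE_mp q)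
  have h1 := cs_integral hf hgR
  have h2 : ∫ s, ‖(g ∘ revE q) s‖ ^ 2 ∂(μpos q) = ∫ s, ‖g s‖ ^ 2 ∂(μpos q) :=
    (revE_mp q).integral_comp' (fun s => ‖g s‖ ^ 2)
  rw [h2] at h1
  unfold L2norm
  rw [← Real.sqrt_mul (integral_nonneg fun _ => by positivity)]
  refine le_trans (norm_integral_le_integral_norm _) ?_
  simp only [norm_mul]
  exact Real.le_sqrt_of_sq_le h1

theorem inner_bound (q : ℕ) (hq : q / 2 + q / 2 = q) (hr : q + q - 2 * (q / 2) = q)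
    {f g : (Fin q → ℝ) → ℂ} (hf : MemLp f 2 (μpos q)) (hg : MemLp g 2 (μpos q))
    (hs : IsSymmFn q g) :
    ‖L2inner q (reindex hr (arc q q (q / 2) f g)) g - L2inner q f g‖
      ≤ L2norm q f * L2norm q (fun t => reindex hr (arc q q (q / 2) g g) t - g t) := by
  have hc := contr_memLp_q q hq hr hg hg
  have h2 : L2inner q f g = ∫ x, f x * g (revE q x) ∂(μpos q) := by
    refine integral_congr_ae ?_
    filter_upwards [symm_conj hs] with x hx
    rw [hx]
  rw [inner_contr q hq hr hf hg hs, h2, ← integral_sub]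
  · simp only [← mul_sub]
    exact cs_norm hf (hc.sub hg)
  · exact hf.integrable_mul (hc.comp_measurePreserving (revE_mp q))
  · exact hf.integrable_mul (hg.comp_measurePreserving (revE_mp q))

theorem L2norm_reindex {a b : ℕ} (h : a = b) (F : (Fin a → ℝ) → ℂ) :
    L2norm b (reindex h F) = L2norm a F := by
  subst h; rfl

theorem L2norm_sq_inner (q : ℕ) (f : (Fin q → ℝ) → ℂ) :
    L2norm q f = Real.sqrt (L2inner q f f).re := by
  unfold L2norm L2inner
  congr 1
  simp only [Complex.mul_conj, Complex.normSq_eq_norm_sq]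
  have := integral_ofReal (𝕜 := ℂ) (μ := μpos q) (f := fun x => ‖f x‖ ^ 2)
  exact ((congrArg Complex.re this).trans (Complex.ofReal_re _)).symm

theorem inner_tendsto (q : ℕ) (hq : q / 2 + q / 2 = q) (hr : q + q - 2 * (q / 2) = q)
    (lam1 : ℝ)
    (f g : ℕ → (Fin q → ℝ) → ℂ)
    (hf : ∀ n, MemLp (f n) 2 (μpos q)) (hg : ∀ n, MemLp (g n) 2 (μpos q))
    (hgs : ∀ n, IsSymmFn q (g n))
    (hff : Tendsto (fun n => L2inner q (f n) (f n)) atTop (nhds (lam1 : ℂ)))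
    (hfg : Tendsto (fun n => L2inner q (f n) (g n)) atTop (nhds 0))
    (hhalf : Tendsto (fun n => L2norm q (fun t =>
        reindex hr (arc q q (q / 2) (g n) (g n)) t - g n t)) atTop (nhds 0)) :
    Tendsto (fun n => (L2inner q (reindex hr (arc q q (q / 2) (f n) (g n))) (g n)).re)
      atTop (nhds 0) := by
  have h1 : Tendsto (fun n => L2norm q (f n)) atTop (nhds (Real.sqrt lam1)) := by
    simp only [L2norm_sq_inner]
    have := (Complex.continuous_re.tendsto _).comp hff
    exact (Real.continuous_sqrt.tendsto _).comp this
  have h2 := h1.mul hhalf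
  rw [mul_zero] at h2
  have h3 := squeeze_zero_norm (fun n => inner_bound q hq hr (hf n) (hg n) (hgs n)) h2
  have h4 := h3.add hfg
  simp only [sub_add_cancel, add_zero] at h4
  exact (Complex.continuous_re.tendsto _).comp h4

/-- the combined fourth-moment quantity
`‖f_n ⌢_{q/2} g_n‖² + 2 Re⟨f_n ⌢_{q/2} g_n, g_n⟩ + Σ_{1 ≤ r ≤ q-1, r ≠ q/2} ‖f_n ⌢_r g_n‖²`
tends to `0` iff all contraction norms `‖f_n ⌢_r g_n‖`, `1 ≤ r ≤ q-1`, tend to `0`. -/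
theorem arc_contraction_combined_iff (q : ℕ) (hq2 : 2 ≤ q) (hqe : q % 2 = 0)
    (lam1 lam2 : ℝ) (hlam1 : 0 < lam1) (hlam2 : 0 < lam2)
    (f g : ℕ → (Fin q → ℝ) → ℂ)
    (hf : ∀ n, MeasureTheory.MemLp (f n) 2 (μpos q))
    (hg : ∀ n, MeasureTheory.MemLp (g n) 2 (μpos q))
    (hfs : ∀ n, IsSymmFn q (f n)) (hgs : ∀ n, IsSymmFn q (g n))
    (hff : Filter.Tendsto (fun n => L2inner q (f n) (f n)) Filter.atTop (nhds (lam1 : ℂ)))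
    (hgg : Filter.Tendsto (fun n => L2inner q (g n) (g n)) Filter.atTop (nhds (lam2 : ℂ)))
    (hfg : Filter.Tendsto (fun n => L2inner q (f n) (g n)) Filter.atTop (nhds 0))
    (hhalf : Filter.Tendsto (fun n => L2norm q (fun t =>
        reindex (show q + q - 2 * (q / 2) = q by omega) (arc q q (q / 2) (g n) (g n)) t
          - g n t)) Filter.atTop (nhds 0)) :
    Filter.Tendsto (fun n =>
        (L2norm q (reindex (show q + q - 2 * (q / 2) = q by omega)
            (arc q q (q / 2) (f n) (g n)))) ^ 2
        + 2 * (L2inner q (reindex (show q + q - 2 * (q / 2) = q by omega)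
            (arc q q (q / 2) (f n) (g n))) (g n)).re
        + ∑ r ∈ (Finset.Icc 1 (q - 1)).erase (q / 2),
            (L2norm (q + q - 2 * r) (arc q q r (f n) (g n))) ^ 2)
      Filter.atTop (nhds 0)
    ↔ ∀ r, 1 ≤ r → r ≤ q - 1 →
        Filter.Tendsto (fun n => L2norm (q + q - 2 * r) (arc q q r (f n) (g n)))
          Filter.atTop (nhds 0) := by
  have hq : q / 2 + q / 2 = q := by omega
  have hr : q + q - 2 * (q / 2) = q := by omega
  have hin := inner_tendsto q hq hr lam1 f g hf hg hgs hff hfg hhalf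
  have hin2 : Tendsto (fun n => 2 * (L2inner q (reindex hr (arc q q (q / 2) (f n) (g n)))
      (g n)).re) atTop (nhds 0) := by
    simpa using hin.const_mul 2
  have hmem : q / 2 ∈ Finset.Icc 1 (q - 1) := Finset.mem_Icc.2 ⟨by omega, by omega⟩
  have key : ∀ n, (L2norm q (reindex hr (arc q q (q / 2) (f n) (g n)))) ^ 2
        + 2 * (L2inner q (reindex hr (arc q q (q / 2) (f n) (g n))) (g n)).re
        + ∑ r ∈ (Finset.Icc 1 (q - 1)).erase (q / 2),
            (L2norm (q + q - 2 * r) (arc q q r (f n) (g n))) ^ 2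
      = 2 * (L2inner q (reindex hr (arc q q (q / 2) (f n) (g n))) (g n)).re
        + ∑ r ∈ Finset.Icc 1 (q - 1),
            (L2norm (q + q - 2 * r) (arc q q r (f n) (g n))) ^ 2 := by
    intro n
    rw [← Finset.add_sum_erase _ _ hmem, L2norm_reindex]
    ring
  rw [tendsto_congr key]
  constructor
  · intro h r h1 h2
    have h3 := h.sub hin2
    simp only [add_sub_cancel_left, sub_zero] at h3
    have h4 : Tendsto (fun n => (L2norm (q + q - 2 * r) (arc q q r (f n) (g n))) ^ 2)
        atTop (nhds 0) := by
      refine squeeze_zero (fun n => sq_nonneg _) (fun n => ?_) h3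
      exact Finset.single_le_sum
        (f := fun r => (L2norm (q + q - 2 * r) (arc q q r (f n) (g n))) ^ 2)
        (fun _ _ => sq_nonneg _) (Finset.mem_Icc.2 ⟨h1, h2⟩)
    have h5 := (Real.continuous_sqrt.tendsto _).comp h4
    rw [Real.sqrt_zero] at h5
    refine h5.congr fun n => ?_
    exact Real.sqrt_sq (Real.sqrt_nonneg _)
  · intro h
    have h3 : Tendsto (fun n => ∑ r ∈ Finset.Icc 1 (q - 1),
            (L2norm (q + q - 2 * r) (arc q q r (f n) (g n))) ^ 2) atTop
        (nhds (∑ r ∈ Finset.Icc 1 (q - 1), (0 : ℝ) ^ 2)) :=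
      tendsto_finsetSum _ fun r hr => ((h r (Finset.mem_Icc.1 hr).1 (Finset.mem_Icc.1 hr).2).pow 2)
    simpa using hin2.add h3

end
end

section
/- Let q ≥ 2 be an even integer, let λ_i > 0 for i ∈ ℕ, and let {f_n^{(i)} : n, i ∈ ℕ} be a bi-indexed family of symmetric functions in L²(ℝ₊^q) such that: ⟨f_n^{(i)}, f_n^{(j)}⟩ → δ_{ij} λ_i for all i, j; ‖f_n^{(i)} ⌢_{q/2} f_n^{(i)} − f_n^{(i)}‖ → 0 for all i; ‖f_n^{(i)} ⌢_r f_n^{(i)}‖ → 0 for all i and all 1 ≤ r ≤ q−1 with r ≠ q/2; and ‖f_n^{(i)} ⌢_r f_n^{(j)}‖ → 0 for all i ≠ j and all 1 ≤ r ≤ q−1. Then for every integer m ≥ 2, every function χ : {1,…,m} → ℕ, and every tuple (r₁,…,r_{m−1}) ∈ E_m = B_m \ D_m, the scalar iterated contraction (⋯((f_n^{(χ(1))} ⌢_{r₁} f_n^{(χ(2))}) ⌢_{r₂} f_n^{(χ(3))})⋯) ⌢_{r_{m−1}} f_n^{(χ(m))} converges to 0 as n → ∞. -/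
open MeasureTheory Filter Topology

noncomputable section

/-- Membership in `A_m`: tuples `(r₁,…,r_{m-1}) ∈ {0,…,q}^{m-1}` (encoded as the values of
`r` at `1,…,m-1`) satisfying `r_p ≤ pq - 2(r₁+⋯+r_{p-1})` for `2 ≤ p ≤ m-1`. -/
def memA (q m : ℕ) (r : ℕ → ℕ) : Prop :=
  (∀ p, 1 ≤ p → p ≤ m - 1 → r p ≤ q) ∧
  (∀ p, 2 ≤ p → p ≤ m - 1 → r p + 2 * ∑ k ∈ Finset.Icc 1 (p - 1), r k ≤ p * q)

/-- Membership in `B_m`: tuples of `A_m` with `2(r₁+⋯+r_{m-1}) = mq`. -/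
def memB (q m : ℕ) (r : ℕ → ℕ) : Prop :=
  memA q m r ∧ 2 * ∑ k ∈ Finset.Icc 1 (m - 1), r k = m * q

/-- Membership in `D_m = B_m ∩ {0, q/2, q}^{m-1}`. -/
def memD (q m : ℕ) (r : ℕ → ℕ) : Prop :=
  memB q m r ∧ ∀ p, 1 ≤ p → p ≤ m - 1 → (r p = 0 ∨ r p = q / 2 ∨ r p = q)

/-- Membership in `E_m = B_m \ D_m`. -/
def memE (q m : ℕ) (r : ℕ → ℕ) : Prop := memB q m r ∧ ¬ memD q m r


open scoped ENNReal

section abstractContr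

set_option linter.unusedSectionVars false

variable {X S Y : Type*} [MeasurableSpace X] [MeasurableSpace S] [MeasurableSpace Y]
  {μ : Measure X} {σ : Measure S} {ν : Measure Y} [SFinite μ] [SFinite σ] [SFinite ν]

theorem eLpNorm_two_sq {Z : Type*} [MeasurableSpace Z] (τ : Measure Z) (f : Z → ℂ) :
    eLpNorm f 2 τ ^ 2 = ∫⁻ z, ‖f z‖ₑ ^ 2 ∂τ := by
  rw [eLpNorm_eq_lintegral_rpow_enorm_toReal two_ne_zero ENNReal.ofNat_ne_top, ← ENNReal.rpow_two,
    ← ENNReal.rpow_mul]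
  simp

theorem cs_slice {Z : Type*} [MeasurableSpace Z] (τ : Measure Z) (f g : Z → ℂ)
    (hf : AEStronglyMeasurable f τ) (hg : AEStronglyMeasurable g τ) :
    ‖∫ z, f z * g z ∂τ‖ₑ ^ 2 ≤ (∫⁻ z, ‖f z‖ₑ ^ 2 ∂τ) * ∫⁻ z, ‖g z‖ₑ ^ 2 ∂τ := by
  have h1 : ‖∫ z, f z * g z ∂τ‖ₑ ≤ ∫⁻ z, ‖f z‖ₑ * ‖g z‖ₑ ∂τ := by
    refine (enorm_integral_le_lintegral_enorm _).trans (le_of_eq ?_)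
    simp
  have h2 := ENNReal.lintegral_mul_le_Lp_mul_Lq τ Real.HolderConjugate.two_two hf.enorm hg.enorm
  have h3 := h1.trans h2
  calc ‖∫ z, f z * g z ∂τ‖ₑ ^ 2 ≤ _ := pow_le_pow_left' h3 2
    _ = _ := by
      rw [mul_pow]
      simp only [← ENNReal.rpow_two, ← ENNReal.rpow_mul]
      simp

theorem ae_left {F : X × S → ℂ} (hF : MemLp F 2 (μ.prod σ)) :
    ∀ᵐ x ∂μ, MemLp (fun s => F (x, s)) 2 σ := by
  have h1 := hF.1.prodMk_left
  have h2 : ∫⁻ z, ‖F z‖ₑ ^ 2 ∂(μ.prod σ) < ∞ := by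
    rw [← eLpNorm_two_sq]
    exact ENNReal.pow_lt_top hF.2
  have hm : AEMeasurable (fun z => ‖F z‖ₑ ^ 2) (μ.prod σ) := hF.1.enorm.pow_const 2
  rw [lintegral_prod _ hm] at h2
  have h3 := ae_lt_top' hm.lintegral_prod_right' h2.ne
  filter_upwards [h1, h3] with x hx1 hx3
  refine ⟨hx1, ?_⟩
  rw [← eLpNorm_two_sq] at hx3
  by_contra hc
  simp only [not_lt, top_le_iff] at hc
  simp [hc] at hx3

theorem ae_right {G : S × Y → ℂ} (hG : MemLp G 2 (σ.prod ν)) :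
    ∀ᵐ y ∂ν, MemLp (fun s => G (s, y)) 2 σ :=
  ae_left (F := G ∘ Prod.swap) (hG.comp_measurePreserving Measure.measurePreserving_swap)

theorem contr_aesm {F : X × S → ℂ} {G : S × Y → ℂ} (hF : MemLp F 2 (μ.prod σ))
    (hG : MemLp G 2 (σ.prod ν)) :
    AEStronglyMeasurable (fun z : X × Y => ∫ s, F (z.1, s) * G (s, z.2) ∂σ) (μ.prod ν) := by
  have q1 : Measure.QuasiMeasurePreserving (Prod.map Prod.fst id : (X × Y) × S → X × S)
      ((μ.prod ν).prod σ) (μ.prod σ) :=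
    QuasiMeasurePreserving.prodMap Measure.quasiMeasurePreserving_fst (Measure.QuasiMeasurePreserving.id σ)
  have q2 : Measure.QuasiMeasurePreserving (Prod.map Prod.snd id : (X × Y) × S → Y × S)
      ((μ.prod ν).prod σ) (ν.prod σ) :=
    QuasiMeasurePreserving.prodMap Measure.quasiMeasurePreserving_snd (Measure.QuasiMeasurePreserving.id σ)
  have q3 := (Measure.measurePreserving_swap (μ := ν) (ν := σ)).quasiMeasurePreserving.comp q2
  have h := (hF.1.comp_quasiMeasurePreserving q1).mul (hG.1.comp_quasiMeasurePreserving q3)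
  exact h.integral_prod_right'

theorem contr_bound {F : X × S → ℂ} {G : S × Y → ℂ} (hF : MemLp F 2 (μ.prod σ))
    (hG : MemLp G 2 (σ.prod ν)) :
    eLpNorm (fun z : X × Y => ∫ s, F (z.1, s) * G (s, z.2) ∂σ) 2 (μ.prod ν)
      ≤ eLpNorm F 2 (μ.prod σ) * eLpNorm G 2 (σ.prod ν) := by
  rw [← ENNReal.pow_le_pow_left_iff two_ne_zero, mul_pow, eLpNorm_two_sq, eLpNorm_two_sq,
    eLpNorm_two_sq]
  have hmF : AEMeasurable (fun z => ‖F z‖ₑ ^ 2) (μ.prod σ) := hF.1.enorm.pow_const 2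
  have hmG : AEMeasurable (fun z => ‖G z‖ₑ ^ 2) (σ.prod ν) := hG.1.enorm.pow_const 2
  have hmG' : AEMeasurable (fun z : Y × S => ‖G z.swap‖ₑ ^ 2) (ν.prod σ) :=
    hmG.comp_quasiMeasurePreserving
      (Measure.measurePreserving_swap (μ := ν) (ν := σ)).quasiMeasurePreserving
  have hprod := lintegral_prod_mul hmF.lintegral_prod_right' hmG'.lintegral_prod_right'
  simp only [Prod.swap_prod_mk] at hprod
  rw [lintegral_prod _ hmF, lintegral_prod_symm _ hmG, ← hprod]
  have e1 := Measure.quasiMeasurePreserving_fst (μ := μ) (ν := ν) |>.ae (ae_left hF)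
  have e2 := Measure.quasiMeasurePreserving_snd (μ := μ) (ν := ν) |>.ae (ae_right hG)
  refine lintegral_mono_ae ?_
  filter_upwards [e1, e2] with z h1 h2
  exact cs_slice σ _ _ h1.1 h2.1

theorem contr_sub {F F' : X × S → ℂ} {G : S × Y → ℂ} (hF : MemLp F 2 (μ.prod σ))
    (hF' : MemLp F' 2 (μ.prod σ)) (hG : MemLp G 2 (σ.prod ν)) :
    ∀ᵐ z ∂(μ.prod ν), ∫ s, (F (z.1, s) - F' (z.1, s)) * G (s, z.2) ∂σ =
      (∫ s, F (z.1, s) * G (s, z.2) ∂σ) - ∫ s, F' (z.1, s) * G (s, z.2) ∂σ := by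
  have e1 := Measure.quasiMeasurePreserving_fst (μ := μ) (ν := ν) |>.ae (ae_left hF)
  have e1' := Measure.quasiMeasurePreserving_fst (μ := μ) (ν := ν) |>.ae (ae_left hF')
  have e2 := Measure.quasiMeasurePreserving_snd (μ := μ) (ν := ν) |>.ae (ae_right hG)
  filter_upwards [e1, e1', e2] with z h1 h1' h2
  simp only [sub_mul]
  exact integral_sub (h1.integrable_mul h2) (h1'.integrable_mul h2)

end abstractContr

section orthant

theorem μpos_eq (n : ℕ) :
    μpos n = Measure.pi (fun _ : Fin n => (volume : Measure ℝ).restrict (Set.Ici 0)) := by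
  rw [μpos, volume_pi, ← Measure.restrict_pi_pi]
  congr 1
  ext x
  simp [posOrthant, Pi.le_def]

instance (n : ℕ) : SigmaFinite (μpos n) := by
  rw [μpos]; infer_instance

def glue {a b c : ℕ} (e : Fin a ⊕ Fin b ≃ Fin c) :
    ((Fin a → ℝ) × (Fin b → ℝ)) ≃ᵐ (Fin c → ℝ) :=
  (MeasurableEquiv.sumPiEquivProdPi (fun _ => ℝ)).symm.trans
    (MeasurableEquiv.piCongrLeft (fun _ => ℝ) e)

theorem glue_mp {a b c : ℕ} (e : Fin a ⊕ Fin b ≃ Fin c) :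
    MeasurePreserving (glue e) ((μpos a).prod (μpos b)) (μpos c) := by
  rw [μpos_eq, μpos_eq, μpos_eq]
  exact (measurePreserving_sumPiEquivProdPi_symm
      (fun _ : Fin a ⊕ Fin b => (volume : Measure ℝ).restrict (Set.Ici 0))).trans
    (measurePreserving_piCongrLeft (fun _ : Fin c => (volume : Measure ℝ).restrict (Set.Ici 0)) e)

theorem glue_apply {a b c : ℕ} (e : Fin a ⊕ Fin b ≃ Fin c) (x : Fin a → ℝ) (y : Fin b → ℝ)
    (i : Fin a ⊕ Fin b) : glue e (x, y) (e i) = Sum.elim x y i := by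
  rw [glue, MeasurableEquiv.trans_apply, MeasurableEquiv.piCongrLeft_apply_apply]
  cases i <;> rfl

theorem glue_eq {a b c : ℕ} (e : Fin a ⊕ Fin b ≃ Fin c) (x : Fin a → ℝ) (y : Fin b → ℝ)
    (t : Fin c → ℝ) (hl : ∀ i, t (e (Sum.inl i)) = x i) (hr : ∀ i, t (e (Sum.inr i)) = y i) :
    t = glue e (x, y) := by
  funext j
  obtain ⟨i, rfl⟩ := e.surjective j
  rw [glue_apply]
  cases i
  · exact hl _
  · exact hr _

/-- Concatenation of indices. -/
def catE {a b c : ℕ} (h : a + b = c) : Fin a ⊕ Fin b ≃ Fin c :=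
  finSumFinEquiv.trans (finCongr h)

/-- Concatenation of indices, the second block reversed. -/
def catR {a b c : ℕ} (h : a + b = c) : Fin a ⊕ Fin b ≃ Fin c :=
  ((Equiv.refl _).sumCongr Fin.revPerm).trans (catE h)

/-- Arc contraction with flexible target dimension. -/
def arcG (d m n p : ℕ) (f : (Fin m → ℝ) → ℂ) (g : (Fin n → ℝ) → ℂ) : (Fin d → ℝ) → ℂ :=
  fun t => ∫ s, f (fun j => if (j : ℕ) < m - p then pad t j else pad s (m - 1 - (j : ℕ))) *
    g (fun j => if (j : ℕ) < p then pad s j else pad t (m + (j : ℕ) - 2 * p)) ∂(μpos p)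

theorem arcG_glue {d m n p a b : ℕ} (ha : a + p = m) (hb : p + b = n) (hd : a + b = d)
    (f : (Fin m → ℝ) → ℂ) (g : (Fin n → ℝ) → ℂ) :
    arcG d m n p f g ∘ glue (catE hd) = fun z => ∫ s, (f ∘ glue (catR ha)) (z.1, s) *
      (g ∘ glue (catE hb)) (s, z.2) ∂(μpos p) := by
  funext ⟨x, y⟩
  simp only [Function.comp_apply, arcG]
  congr 1
  funext s
  have hx : ∀ i : Fin a, pad (glue (catE hd) (x, y)) i = x i := by
    intro i
    rw [pad, dif_pos (by omega)]
    exact glue_apply (catE hd) x y (Sum.inl i)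
  have hy : ∀ (i : Fin b) (k : ℕ), k = a + i → pad (glue (catE hd) (x, y)) k = y i := by
    intro i k hk
    subst hk
    rw [pad, dif_pos (by omega)]
    exact glue_apply (catE hd) x y (Sum.inr i)
  congr 2
  · apply glue_eq
    · intro i
      have : ((catR ha (Sum.inl i) : Fin m) : ℕ) = i := by simp [catR, catE]
      rw [this, if_pos (by omega), hx]
    · intro i
      have : ((catR ha (Sum.inr i) : Fin m) : ℕ) = a + (p - (i + 1)) := by simp [catR, catE]
      rw [this, if_neg (by omega), pad, dif_pos (by omega)]
      congr 1
      ext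
      simp only
      omega
  · apply glue_eq
    · intro i
      have : ((catE hb (Sum.inl i) : Fin n) : ℕ) = i := by simp [catE]
      rw [this, if_pos (by omega), pad, dif_pos (by omega)]
    · intro i
      have : ((catE hb (Sum.inr i) : Fin n) : ℕ) = p + i := by simp [catE]
      rw [this, if_neg (by omega), hy i]
      omega

theorem arcG_bound {d m n p : ℕ} (hm : p ≤ m) (hn : p ≤ n) (hd : d + 2 * p = m + n)
    {f : (Fin m → ℝ) → ℂ} {g : (Fin n → ℝ) → ℂ} (hf : MemLp f 2 (μpos m))
    (hg : MemLp g 2 (μpos n)) :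
    MemLp (arcG d m n p f g) 2 (μpos d) ∧
      eLpNorm (arcG d m n p f g) 2 (μpos d) ≤ eLpNorm f 2 (μpos m) * eLpNorm g 2 (μpos n) := by
  obtain ⟨a, rfl⟩ := Nat.exists_eq_add_of_le' hm
  obtain ⟨b, rfl⟩ := Nat.exists_eq_add_of_le hn
  obtain rfl : d = a + b := by omega
  have hF := hf.comp_measurePreserving (glue_mp (catR (rfl : a + p = a + p)))
  have hG := hg.comp_measurePreserving (glue_mp (catE (rfl : p + b = p + b)))
  have hA := contr_aesm hF hG
  have hB := contr_bound hF hG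
  rw [← arcG_glue rfl rfl rfl] at hA hB
  have hA' := ((glue_mp _).aestronglyMeasurable_comp_iff
    (glue (catE (rfl : a + b = a + b))).measurableEmbedding).1 hA
  rw [eLpNorm_comp_measurePreserving hA' (glue_mp _),
    eLpNorm_comp_measurePreserving hf.1 (glue_mp _),
    eLpNorm_comp_measurePreserving hg.1 (glue_mp _)] at hB
  exact ⟨⟨hA', hB.trans_lt (ENNReal.mul_lt_top hf.2 hg.2)⟩, hB⟩

theorem arcG_sub {d m n p : ℕ} (hm : p ≤ m) (hn : p ≤ n) (hd : d + 2 * p = m + n)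
    {f f' : (Fin m → ℝ) → ℂ} {g : (Fin n → ℝ) → ℂ} (hf : MemLp f 2 (μpos m))
    (hf' : MemLp f' 2 (μpos m)) (hg : MemLp g 2 (μpos n)) :
    arcG d m n p (f - f') g =ᵐ[μpos d] arcG d m n p f g - arcG d m n p f' g := by
  obtain ⟨a, rfl⟩ := Nat.exists_eq_add_of_le' hm
  obtain ⟨b, rfl⟩ := Nat.exists_eq_add_of_le hn
  obtain rfl : d = a + b := by omega
  have hF := hf.comp_measurePreserving (glue_mp (catR (rfl : a + p = a + p)))
  have hF' := hf'.comp_measurePreserving (glue_mp (catR (rfl : a + p = a + p)))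
  have hG := hg.comp_measurePreserving (glue_mp (catE (rfl : p + b = p + b)))
  have h := contr_sub hF hF' hG
  have hmp := glue_mp (catE (rfl : a + b = a + b))
  rw [Filter.EventuallyEq, ← hmp.map_eq,
    (glue (catE (rfl : a + b = a + b))).measurableEmbedding.ae_map_iff]
  filter_upwards [h] with z hz
  have k1 := congrFun (arcG_glue rfl rfl rfl (f - f') g) z
  have k2 := congrFun (arcG_glue rfl rfl rfl f g) z
  have k3 := congrFun (arcG_glue rfl rfl rfl f' g) z
  simp only [Function.comp_apply] at k1 k2 k3 hz
  rw [Pi.sub_apply, k1, k2, k3, ← hz]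
  rfl

end orthant

section induct

theorem μpos_zero : μpos 0 = Measure.dirac (fun _ => 0) := by
  rw [μpos_eq, Measure.pi_of_empty (x := fun _ => 0)]

theorem eLpNorm_zero_dim (u : (Fin 0 → ℝ) → ℂ) :
    eLpNorm u 2 (μpos 0) = ‖u (fun _ => 0)‖ₑ := by
  have : u = fun _ => u (fun _ => 0) := by
    funext t
    congr 1
    exact Subsingleton.elim _ _
  rw [this, μpos_zero, eLpNorm_const _ two_ne_zero (by simp)]
  simp

theorem memLp_zero_dim (u : (Fin 0 → ℝ) → ℂ) : MemLp u 2 (μpos 0) := by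
  have : u = fun _ => u (fun _ => 0) := by
    funext t
    congr 1
    exact Subsingleton.elim _ _
  rw [this, μpos_zero]
  exact memLp_const _

/-- Tensor product of functions. -/
def tens (d a b : ℕ) (G : (Fin a → ℝ) → ℂ) (h : (Fin b → ℝ) → ℂ) : (Fin d → ℝ) → ℂ :=
  fun t => G (fun j => pad t j) * h (fun j => pad t (a + j))

theorem arcG_zero (d a b : ℕ) (G : (Fin a → ℝ) → ℂ) (h : (Fin b → ℝ) → ℂ) :
    arcG d a b 0 G h = tens d a b G h := by
  funext t
  simp only [arcG, tens, μpos_zero, integral_dirac]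
  simp

theorem tens_bound {d a b : ℕ} (hd : a + b = d)
    {f : (Fin a → ℝ) → ℂ} {g : (Fin b → ℝ) → ℂ} (hf : MemLp f 2 (μpos a))
    (hg : MemLp g 2 (μpos b)) :
    MemLp (tens d a b f g) 2 (μpos d) ∧
      eLpNorm (tens d a b f g) 2 (μpos d) ≤ eLpNorm f 2 (μpos a) * eLpNorm g 2 (μpos b) := by
  rw [← arcG_zero]
  exact arcG_bound (by omega) (by omega) (by omega) hf hg

theorem arcG_tens {d m n q a e r : ℕ} (hm : a + q = m) (hrq : r ≤ q) (hrn : r ≤ n)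
    (he : e + 2 * r = q + n) (G : (Fin a → ℝ) → ℂ) (h : (Fin q → ℝ) → ℂ)
    (g : (Fin n → ℝ) → ℂ) :
    arcG d m n r (tens m a q G h) g = tens d a e G (arcG e q n r h g) := by
  funext t
  simp only [arcG, tens]
  rw [← integral_const_mul]
  congr 1
  funext s
  rw [mul_assoc]
  congr 2
  · congr 1
    funext j
    have := j.2
    rw [pad, dif_pos (by omega)]
    simp only
    rw [if_pos (by omega)]
  · congr 1
    funext j
    have := j.2
    rw [pad, dif_pos (by omega)]
    simp only
    by_cases hj : (j : ℕ) < q - r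
    · rw [if_pos (by omega), if_pos hj]
      conv_rhs => rw [pad, dif_pos (show (j : ℕ) < e by omega)]
    · rw [if_neg (by omega), if_neg hj]
      congr 1
      omega
  · congr 1
    funext j
    have := j.2
    by_cases hj : (j : ℕ) < r
    · rw [if_pos hj, if_pos hj]
    · rw [if_neg hj, if_neg hj]
      conv_rhs => rw [pad, dif_pos (show q + (j : ℕ) - 2 * r < e by omega)]
      simp only
      congr 1
      omega

def SmallSeq (d : ℕ) (F : ℕ → (Fin d → ℝ) → ℂ) : Prop :=
  Tendsto (fun n => eLpNorm (F n) 2 (μpos d)) atTop (𝓝 0)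

def BddSeq (d : ℕ) (F : ℕ → (Fin d → ℝ) → ℂ) : Prop :=
  ∃ C : ℝ≥0∞, C ≠ ∞ ∧ ∀ᶠ n in atTop, eLpNorm (F n) 2 (μpos d) ≤ C

theorem SmallSeq.bdd {d : ℕ} {F : ℕ → (Fin d → ℝ) → ℂ} (h : SmallSeq d F) : BddSeq d F :=
  ⟨1, by simp, h.eventually_le_const (by simp)⟩

theorem tendsto_bdd_mul {u v w : ℕ → ℝ≥0∞} (hv : ∃ C : ℝ≥0∞, C ≠ ∞ ∧ ∀ᶠ n in atTop, v n ≤ C)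
    (hw : Tendsto w atTop (𝓝 0)) (h : ∀ n, u n ≤ v n * w n) : Tendsto u atTop (𝓝 0) := by
  obtain ⟨C, hC, hv⟩ := hv
  have h1 : Tendsto (fun n => C * w n) atTop (𝓝 0) := by
    simpa using ENNReal.Tendsto.const_mul (a := C) hw (Or.inr hC)
  refine tendsto_of_tendsto_of_tendsto_of_le_of_le' tendsto_const_nhds h1 (by simp) ?_
  filter_upwards [hv] with n hn
  exact (h n).trans (mul_le_mul_left hn _)

theorem SmallSeq.add {d : ℕ} {F G : ℕ → (Fin d → ℝ) → ℂ} (h : SmallSeq d F) (h' : SmallSeq d G)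
    (hF : ∀ n, MemLp (F n) 2 (μpos d)) (hG : ∀ n, MemLp (G n) 2 (μpos d)) :
    SmallSeq d (fun n => F n + G n) := by
  have := Tendsto.add h h'
  rw [add_zero] at this
  exact tendsto_of_tendsto_of_tendsto_of_le_of_le tendsto_const_nhds this (fun _ => by simp)
    (fun n => eLpNorm_add_le (hF n).1 (hG n).1 (by norm_num))

theorem BddSeq.add {d : ℕ} {F G : ℕ → (Fin d → ℝ) → ℂ} (h : BddSeq d F) (h' : BddSeq d G)
    (hF : ∀ n, MemLp (F n) 2 (μpos d)) (hG : ∀ n, MemLp (G n) 2 (μpos d)) :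
    BddSeq d (fun n => F n + G n) := by
  obtain ⟨C, hC, h⟩ := h
  obtain ⟨C', hC', h'⟩ := h'
  refine ⟨C + C', by simp [hC, hC'], ?_⟩
  filter_upwards [h, h'] with n h1 h2
  exact (eLpNorm_add_le (hF n).1 (hG n).1 (by norm_num)).trans (add_le_add h1 h2)

theorem bdd_mul {u v w : ℕ → ℝ≥0∞} (hv : ∃ C : ℝ≥0∞, C ≠ ∞ ∧ ∀ᶠ n in atTop, v n ≤ C)
    (hw : ∃ C : ℝ≥0∞, C ≠ ∞ ∧ ∀ᶠ n in atTop, w n ≤ C)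
    (h : ∀ n, u n ≤ v n * w n) : ∃ C : ℝ≥0∞, C ≠ ∞ ∧ ∀ᶠ n in atTop, u n ≤ C := by
  obtain ⟨C, hC, hv⟩ := hv
  obtain ⟨C', hC', hw⟩ := hw
  refine ⟨C * C', ENNReal.mul_ne_top hC hC', ?_⟩
  filter_upwards [hv, hw] with n h1 h2
  exact (h n).trans (mul_le_mul' h1 h2)

inductive GoodSeq (q : ℕ) (f : ℕ → ℕ → (Fin q → ℝ) → ℂ) :
    (d : ℕ) → (ℕ → (Fin d → ℝ) → ℂ) → Prop
  | small (d : ℕ) (F : ℕ → (Fin d → ℝ) → ℂ) (hF : ∀ n, MemLp (F n) 2 (μpos d))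
      (h : SmallSeq d F) : GoodSeq q f d F
  | scal (F : ℕ → (Fin 0 → ℝ) → ℂ) (h : BddSeq 0 F) : GoodSeq q f 0 F
  | tensor (d a : ℕ) (had : a + q = d) (G : ℕ → (Fin a → ℝ) → ℂ) (hG : GoodSeq q f a G)
      (F : ℕ → (Fin d → ℝ) → ℂ) (hF : ∀ n, MemLp (F n) 2 (μpos d)) (i : ℕ)
      (h : SmallSeq d (fun n => F n - tens d a q (G n) (f n i))) : GoodSeq q f d F

variable {q : ℕ} {f : ℕ → ℕ → (Fin q → ℝ) → ℂ}

theorem GoodSeq.memLp {d : ℕ} {F : ℕ → (Fin d → ℝ) → ℂ} (h : GoodSeq q f d F) :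
    ∀ n, MemLp (F n) 2 (μpos d) := by
  cases h with
  | small _ _ hF _ => exact hF
  | scal _ _ => exact fun n => memLp_zero_dim _
  | tensor _ _ _ _ _ _ hF _ _ => exact hF

theorem GoodSeq.bdd (hmem : ∀ n i, MemLp (f n i) 2 (μpos q)) (hb : ∀ i, BddSeq q (fun n => f n i))
    {d : ℕ} {F : ℕ → (Fin d → ℝ) → ℂ} (h : GoodSeq q f d F) : BddSeq d F := by
  induction h with
  | small _ _ hF h => exact h.bdd
  | scal _ h => exact h
  | tensor d a had G hG F hF i h ih =>
    have hT : ∀ n, MemLp (tens d a q (G n) (f n i)) 2 (μpos d) :=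
      fun n => (tens_bound had (hG.memLp n) (hmem n i)).1
    have h2 : BddSeq d (fun n => tens d a q (G n) (f n i)) :=
      bdd_mul ih (hb i) (fun n => (tens_bound had (hG.memLp n) (hmem n i)).2)
    have := h.bdd.add h2 (fun n => (hF n).sub (hT n)) hT
    simpa using this

theorem GoodSeq.smul (hmem : ∀ n i, MemLp (f n i) 2 (μpos q))
    {c : ℕ → ℂ} (hc : ∃ C : ℝ≥0∞, C ≠ ∞ ∧ ∀ᶠ n in atTop, ‖c n‖ₑ ≤ C)
    {d : ℕ} {G : ℕ → (Fin d → ℝ) → ℂ} (hG : GoodSeq q f d G) :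
    ∀ (F : ℕ → (Fin d → ℝ) → ℂ), (∀ n, MemLp (F n) 2 (μpos d)) →
    SmallSeq d (fun n => F n - c n • G n) → GoodSeq q f d F := by
  induction hG with
  | small d G hG h =>
    intro F hF hFG
    refine GoodSeq.small _ _ hF ?_
    have h2 : SmallSeq d (fun n => c n • G n) :=
      tendsto_bdd_mul hc h (fun n => (eLpNorm_const_smul _ _ _ _).le)
    have := hFG.add h2 (fun n => (hF n).sub ((hG n).const_smul _)) (fun n => (hG n).const_smul _)
    simpa using this
  | scal G h =>
    intro F hF hFG
    refine GoodSeq.scal _ ?_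
    have h2 : BddSeq 0 (fun n => c n • G n) :=
      bdd_mul hc h (fun n => (eLpNorm_const_smul _ _ _ _).le)
    have := hFG.bdd.add h2 (fun n => memLp_zero_dim _) (fun n => memLp_zero_dim _)
    simpa using this
  | tensor d a had H hH G hG i h ih =>
    intro F hF hFG
    have hcH : GoodSeq q f a (fun n => c n • H n) := by
      refine ih _ (fun n => (hH.memLp n).const_smul _) ?_
      simp [SmallSeq]
    refine GoodSeq.tensor d a had _ hcH F hF i ?_
    have hT : ∀ n, MemLp (tens d a q (H n) (f n i)) 2 (μpos d) :=
      fun n => (tens_bound had (hH.memLp n) (hmem n i)).1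
    have h2 : SmallSeq d (fun n => c n • (G n - tens d a q (H n) (f n i))) :=
      tendsto_bdd_mul hc h (fun n => (eLpNorm_const_smul _ _ _ _).le)
    have := hFG.add h2 (fun n => (hF n).sub ((hG n).const_smul _))
      (fun n => ((hG n).sub (hT n)).const_smul _)
    convert this using 2 with n
    funext t
    simp only [tens, Pi.sub_apply, Pi.add_apply, Pi.smul_apply, smul_eq_mul]
    ring

theorem GoodSeq.base (hmem : ∀ n i, MemLp (f n i) 2 (μpos q)) (i : ℕ) :
    GoodSeq q f q (fun n => f n i) := by
  refine GoodSeq.tensor q 0 (by omega) (fun _ _ => 1) (GoodSeq.scal _ ⟨1, by simp, ?_⟩) _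
    (fun n => hmem n i) i ?_
  · refine Eventually.of_forall fun n => ?_
    rw [eLpNorm_zero_dim]
    simp
  · have : ∀ n, f n i - tens q 0 q (fun _ => 1) (f n i) = 0 := by
      intro n
      funext t
      simp [tens, pad]
    simp [this, SmallSeq]

theorem small_arc (hmem : ∀ n i, MemLp (f n i) 2 (μpos q)) (hb : ∀ i, BddSeq q (fun n => f n i))
    {d d' r : ℕ} (hrd : r ≤ d) (hrq : r ≤ q) (hd' : d' + 2 * r = d + q) (j : ℕ)
    {F : ℕ → (Fin d → ℝ) → ℂ} (hF : ∀ n, MemLp (F n) 2 (μpos d)) (h : SmallSeq d F) :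
    SmallSeq d' (fun n => arcG d' d q r (F n) (f n j)) :=
  tendsto_bdd_mul (hb j) h fun n => by
    rw [mul_comm]
    exact (arcG_bound hrd hrq hd' (hF n) (hmem n j)).2

theorem approx_arc (hmem : ∀ n i, MemLp (f n i) 2 (μpos q)) (hb : ∀ i, BddSeq q (fun n => f n i))
    {d d' r a e : ℕ} (hrq : r ≤ q) (hd' : d' + 2 * r = d + q) (i j : ℕ)
    (had : a + q = d) (he : e + 2 * r = q + q)
    {F : ℕ → (Fin d → ℝ) → ℂ} (hF : ∀ n, MemLp (F n) 2 (μpos d))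
    {G : ℕ → (Fin a → ℝ) → ℂ} (hG : ∀ n, MemLp (G n) 2 (μpos a))
    (h : SmallSeq d (fun n => F n - tens d a q (G n) (f n i))) :
    SmallSeq d' (fun n => arcG d' d q r (F n) (f n j) -
      tens d' a e (G n) (arcG e q q r (f n i) (f n j))) := by
  have hT : ∀ n, MemLp (tens d a q (G n) (f n i)) 2 (μpos d) :=
      fun n => (tens_bound had (hG n) (hmem n i)).1
  have := small_arc hmem hb (by omega) hrq hd' j (fun n => (hF n).sub (hT n)) h
  refine this.congr fun n => ?_
  beta_reduce
  rw [← arcG_tens had hrq hrq he]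
  exact eLpNorm_congr_ae (arcG_sub (by omega) hrq hd' (hF n) (hT n) (hmem n j))

theorem GoodSeq.step_bad (hmem : ∀ n i, MemLp (f n i) 2 (μpos q))
    (hb : ∀ i, BddSeq q (fun n => f n i))
    {d d' r : ℕ} (hrd : r ≤ d) (hrq : r ≤ q) (hr : 1 ≤ r) (hd' : d' + 2 * r = d + q) (j : ℕ)
    (hS : ∀ i, SmallSeq (q + q - 2 * r) (fun n => arcG (q + q - 2 * r) q q r (f n i) (f n j)))
    {F : ℕ → (Fin d → ℝ) → ℂ} (h : GoodSeq q f d F) :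
    SmallSeq d' (fun n => arcG d' d q r (F n) (f n j)) := by
  cases h with
  | small _ _ hF h => exact small_arc hmem hb hrd hrq hd' j hF h
  | scal _ _ => omega
  | tensor _ a had G hG _ hF i h =>
    have he : q + q - 2 * r + 2 * r = q + q := by omega
    have h1 := approx_arc hmem hb hrq hd' i j had he hF hG.memLp h
    have hA : ∀ n, MemLp (arcG (q + q - 2 * r) q q r (f n i) (f n j)) 2 (μpos _) :=
      fun n => (arcG_bound hrq hrq he (hmem n i) (hmem n j)).1
    have hT := fun n => tens_bound (show a + (q + q - 2 * r) = d' by omega) (hG.memLp n) (hA n)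
    have h2 : SmallSeq d' (fun n => tens d' a (q + q - 2 * r) (G n)
        (arcG (q + q - 2 * r) q q r (f n i) (f n j))) :=
      tendsto_bdd_mul (hG.bdd hmem hb) (hS i) (fun n => (hT n).2)
    have := h1.add h2
      (fun n => ((arcG_bound hrd hrq hd' (hF n) (hmem n j)).1).sub (hT n).1) (fun n => (hT n).1)
    simpa using this

theorem GoodSeq.step (hq2 : 2 ≤ q) (hqe : q % 2 = 0) (hmem : ∀ n i, MemLp (f n i) 2 (μpos q))
    (hb : ∀ i, BddSeq q (fun n => f n i))
    (hS : ∀ i j r, 1 ≤ r → r ≤ q - 1 → (i ≠ j ∨ r ≠ q / 2) →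
      SmallSeq (q + q - 2 * r) (fun n => arcG (q + q - 2 * r) q q r (f n i) (f n j)))
    (hH : ∀ i, SmallSeq q (fun n => arcG q q q (q / 2) (f n i) (f n i) - f n i))
    {d d' r : ℕ} (hrd : r ≤ d) (hrq : r ≤ q) (hd' : d' + 2 * r = d + q) (j : ℕ)
    {F : ℕ → (Fin d → ℝ) → ℂ} (h : GoodSeq q f d F) :
    GoodSeq q f d' (fun n => arcG d' d q r (F n) (f n j)) := by
  have hM : ∀ n, MemLp (arcG d' d q r (F n) (f n j)) 2 (μpos d') :=
    fun n => (arcG_bound hrd hrq hd' (h.memLp n) (hmem n j)).1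
  rcases Nat.eq_zero_or_pos r with rfl | hr
  · refine GoodSeq.tensor d' d (by omega) F h _ hM j ?_
    simp [arcG_zero, SmallSeq]
  by_cases hbad : r ≤ q - 1 ∧ r ≠ q / 2
  · exact GoodSeq.small _ _ hM (h.step_bad hmem hb hrd hrq hr hd' j
      (fun i => hS i j r hr hbad.1 (Or.inr hbad.2)))
  cases h with
  | small _ _ hF h => exact GoodSeq.small _ _ hM (small_arc hmem hb hrd hrq hd' j hF h)
  | scal _ _ => omega
  | tensor _ a had G hG _ hF i h =>
    by_cases hrh : r = q / 2
    · have he : q + 2 * r = q + q := by omega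
      have h1 := approx_arc hmem hb hrq hd' i j had he hF hG.memLp h
      by_cases hij : i = j
      · subst hij
        subst hrh
        refine GoodSeq.tensor d' a (by omega) G hG _ hM i ?_
        have hA : ∀ n, MemLp (arcG q q q (q / 2) (f n i) (f n i)) 2 (μpos q) :=
          fun n => (arcG_bound hrq hrq he (hmem n i) (hmem n i)).1
        have hT := fun n => tens_bound (show a + q = d' by omega) (hG.memLp n)
          ((hA n).sub (hmem n i))
        have hT' := fun n => tens_bound (show a + q = d' by omega) (hG.memLp n) (hA n)
        have h2 : SmallSeq d' (fun n => tens d' a q (G n)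
            (arcG q q q (q / 2) (f n i) (f n i) - f n i)) :=
          tendsto_bdd_mul (hG.bdd hmem hb) (hH i) (fun n => (hT n).2)
        have := h1.add h2 (fun n => (hM n).sub (hT' n).1) (fun n => (hT n).1)
        convert this using 2 with n
        funext t
        simp only [tens, Pi.sub_apply, Pi.add_apply]
        ring
      · have e1 : q + q - 2 * r = q := by omega
        have hs := hS i j r hr (by omega) (Or.inl hij)
        rw [e1] at hs
        have hA : ∀ n, MemLp (arcG q q q r (f n i) (f n j)) 2 (μpos q) :=
          fun n => (arcG_bound hrq hrq he (hmem n i) (hmem n j)).1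
        have hT := fun n => tens_bound (show a + q = d' by omega) (hG.memLp n) (hA n)
        have h2 : SmallSeq d' (fun n => tens d' a q (G n) (arcG q q q r (f n i) (f n j))) :=
          tendsto_bdd_mul (hG.bdd hmem hb) hs (fun n => (hT n).2)
        have := h1.add h2 (fun n => (hM n).sub (hT n).1) (fun n => (hT n).1)
        refine GoodSeq.small _ _ hM ?_
        simpa using this
    · obtain rfl : r = q := by omega
      obtain rfl : a = d' := by omega
      have he : 0 + 2 * r = r + r := by omega
      have h1 := approx_arc hmem hb hrq hd' i j had he hF hG.memLp h
      refine GoodSeq.smul hmem (c := fun n => arcG 0 r r r (f n i) (f n j) (fun _ => 0))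
        ?_ hG _ hM ?_
      · refine bdd_mul (hb i) (hb j) fun n => ?_
        rw [← eLpNorm_zero_dim]
        exact (arcG_bound hrq hrq he (hmem n i) (hmem n j)).2
      · convert h1 using 3 with n
        funext t
        simp only [tens, Pi.smul_apply, smul_eq_mul]
        rw [mul_comm]
        congr 2
        · funext k
          simp [pad]
        · exact Subsingleton.elim _ _

end induct

section final

theorem eLpNorm_eq_L2norm {d : ℕ} {F : (Fin d → ℝ) → ℂ} (hF : MemLp F 2 (μpos d)) :
    eLpNorm F 2 (μpos d) = ENNReal.ofReal (L2norm d F) := by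
  rw [hF.eLpNorm_eq_integral_rpow_norm two_ne_zero ENNReal.ofNat_ne_top, L2norm,
    Real.sqrt_eq_rpow]
  simp

theorem smallSeq_of_L2norm {d : ℕ} {F : ℕ → (Fin d → ℝ) → ℂ}
    (hF : ∀ n, MemLp (F n) 2 (μpos d))
    (h : Tendsto (fun n => L2norm d (F n)) atTop (𝓝 0)) : SmallSeq d F := by
  have := ENNReal.tendsto_ofReal h
  rw [ENNReal.ofReal_zero] at this
  exact this.congr fun n => (eLpNorm_eq_L2norm (hF n)).symm

theorem L2norm_eq_inner (d : ℕ) (F : (Fin d → ℝ) → ℂ) :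
    L2norm d F = Real.sqrt ‖L2inner d F F‖ := by
  have h1 : L2inner d F F = ((∫ x, ‖F x‖ ^ 2 ∂(μpos d) : ℝ) : ℂ) := by
    rw [L2inner, ← integral_complex_ofReal]
    congr 1
    funext x
    rw [Complex.mul_conj, Complex.normSq_eq_norm_sq]
  rw [h1, L2norm, Complex.norm_real, Real.norm_of_nonneg]
  exact integral_nonneg fun x => by positivity

theorem bddSeq_of_inner {d : ℕ} {F : ℕ → (Fin d → ℝ) → ℂ}
    (hF : ∀ n, MemLp (F n) 2 (μpos d)) {c : ℂ}
    (h : Tendsto (fun n => L2inner d (F n) (F n)) atTop (𝓝 c)) : BddSeq d F := by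
  have h1 : Tendsto (fun n => ENNReal.ofReal (L2norm d (F n))) atTop
      (𝓝 (ENNReal.ofReal (Real.sqrt ‖c‖))) := by
    simp only [L2norm_eq_inner]
    exact ENNReal.tendsto_ofReal h.norm.sqrt
  refine ⟨ENNReal.ofReal (Real.sqrt ‖c‖) + 1, by simp, ?_⟩
  have h2 := h1.eventually_le_const
    (ENNReal.lt_add_right (a := ENNReal.ofReal (Real.sqrt ‖c‖)) (b := 1) (by simp) (by simp))
  filter_upwards [h2] with n hn
  rwa [eLpNorm_eq_L2norm (hF n)]

theorem reindex_arc {m n p b : ℕ} (h : m + n - 2 * p = b) (f : (Fin m → ℝ) → ℂ)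
    (g : (Fin n → ℝ) → ℂ) : reindex h (arc m n p f g) = arcG b m n p f g := by
  subst h
  rfl

theorem iter_invariant {q : ℕ} {f : ℕ → ℕ → (Fin q → ℝ) → ℂ} (hq2 : 2 ≤ q) (hqe : q % 2 = 0)
    (hmem : ∀ n i, MemLp (f n i) 2 (μpos q))
    (hb : ∀ i, BddSeq q (fun n => f n i))
    (hS : ∀ i j r, 1 ≤ r → r ≤ q - 1 → (i ≠ j ∨ r ≠ q / 2) →
      SmallSeq (q + q - 2 * r) (fun n => arcG (q + q - 2 * r) q q r (f n i) (f n j)))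
    (hH : ∀ i, SmallSeq q (fun n => arcG q q q (q / 2) (f n i) (f n i) - f n i))
    (m : ℕ) (χ : ℕ → ℕ) (r : ℕ → ℕ) (hr : memA q m r) (k : ℕ) (hk : k ≤ m - 1) :
    ∃ (d : ℕ) (F : ℕ → (Fin d → ℝ) → ℂ),
      (∀ n, iterArc q (f n (χ 1)) ((List.range k).map fun k => (r (k + 1), f n (χ (k + 2)))) =
        ⟨d, F n⟩) ∧
      d + 2 * ∑ k ∈ Finset.Icc 1 k, r k = (k + 1) * q ∧ GoodSeq q f d F ∧
      ((∃ p, 1 ≤ p ∧ p ≤ k ∧ ¬ (r p = 0 ∨ r p = q / 2 ∨ r p = q)) → SmallSeq d F) := by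
  induction k with
  | zero =>
    refine ⟨q, fun n => f n (χ 1), fun n => rfl, by simp, GoodSeq.base hmem _, ?_⟩
    rintro ⟨p, h1, h2, _⟩
    omega
  | succ k ih =>
    obtain ⟨d, F, hit, hd, hg, hs⟩ := ih (by omega)
    have hrq : r (k + 1) ≤ q := hr.1 (k + 1) (by omega) hk
    have hrd : r (k + 1) ≤ d := by
      rcases Nat.eq_zero_or_pos k with rfl | hk0
      · simp at hd
        omega
      · have := hr.2 (k + 1) (by omega) hk
        rw [Nat.add_sub_cancel] at this
        omega
    have hd' : d + q - 2 * r (k + 1) + 2 * r (k + 1) = d + q := by omega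
    refine ⟨d + q - 2 * r (k + 1), fun n => arcG _ d q (r (k + 1)) (F n) (f n (χ (k + 2))),
      ?_, ?_, ?_, ?_⟩
    · intro n
      have := hit n
      simp only [iterArc] at this ⊢
      rw [List.range_succ, List.map_append, List.foldl_append, this]
      rfl
    · rw [Finset.sum_Icc_succ_top (by omega), add_mul, one_mul, ← hd]
      omega
    · exact hg.step hq2 hqe hmem hb hS hH hrd hrq hd' _
    · rintro ⟨p, h1, h2, h3⟩
      by_cases hp : p = k + 1
      · subst hp
        push Not at h3
        exact hg.step_bad hmem hb hrd hrq (by omega) hd' _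
          (fun i => hS i _ _ (by omega) (by omega) (Or.inr h3.2.1))
      · exact small_arc hmem hb hrd hrq hd' _ hg.memLp (hs ⟨p, h1, by omega, h3⟩)

end final

/-- for tuples in `E_m = B_m \ D_m`, the scalar iterated contraction tends to `0`. -/
theorem iterated_contraction_Em_tendsto_zero (q : ℕ) (hq2 : 2 ≤ q) (hqe : q % 2 = 0)
    (lam : ℕ → ℝ) (hlam : ∀ i, 0 < lam i)
    (f : ℕ → ℕ → (Fin q → ℝ) → ℂ)
    (hmem : ∀ n i, MeasureTheory.MemLp (f n i) 2 (μpos q))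
    (hsym : ∀ n i, IsSymmFn q (f n i))
    (hinner : ∀ i j, Filter.Tendsto (fun n => L2inner q (f n i) (f n j)) Filter.atTop
      (nhds (if i = j then (lam i : ℂ) else 0)))
    (hdiag : ∀ i, Filter.Tendsto (fun n => L2norm q (fun t =>
        reindex (show q + q - 2 * (q / 2) = q by omega)
          (arc q q (q / 2) (f n i) (f n i)) t - f n i t)) Filter.atTop (nhds 0))
    (hdiag' : ∀ i r, 1 ≤ r → r ≤ q - 1 → r ≠ q / 2 →
      Filter.Tendsto (fun n => L2norm (q + q - 2 * r) (arc q q r (f n i) (f n i)))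
        Filter.atTop (nhds 0))
    (hoff : ∀ i j, i ≠ j → ∀ r, 1 ≤ r → r ≤ q - 1 →
      Filter.Tendsto (fun n => L2norm (q + q - 2 * r) (arc q q r (f n i) (f n j)))
        Filter.atTop (nhds 0))
    (m : ℕ) (hm : 2 ≤ m) (χ : ℕ → ℕ) (r : ℕ → ℕ) (hr : memE q m r) :
    Filter.Tendsto (fun n => scalarOf (iterArc q (f n (χ 1))
        ((List.range (m - 1)).map fun k => (r (k + 1), f n (χ (k + 2))))))
      Filter.atTop (nhds 0) := by
  have hb : ∀ i, BddSeq q (fun n => f n i) := fun i =>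
    bddSeq_of_inner (fun n => hmem n i) (hinner i i)
  have hS : ∀ i j r, 1 ≤ r → r ≤ q - 1 → (i ≠ j ∨ r ≠ q / 2) →
      SmallSeq (q + q - 2 * r) (fun n => arcG (q + q - 2 * r) q q r (f n i) (f n j)) := by
    intro i j r h1 h2 h3
    refine smallSeq_of_L2norm
      (fun n => (arcG_bound (by omega) (by omega) (by omega) (hmem n i) (hmem n j)).1) ?_
    by_cases hij : i = j
    · subst hij
      exact hdiag' i r h1 h2 (by simpa using h3)
    · exact hoff i j hij r h1 h2
  have hH : ∀ i, SmallSeq q (fun n => arcG q q q (q / 2) (f n i) (f n i) - f n i) := by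
    intro i
    refine smallSeq_of_L2norm
      (fun n => ((arcG_bound (by omega) (by omega) (by omega) (hmem n i) (hmem n i)).1).sub
        (hmem n i)) ?_
    have := hdiag i
    simp only [reindex_arc] at this
    exact this
  obtain ⟨⟨hA, hsum⟩, hnD⟩ := hr
  obtain ⟨d, F, hit, hd, -, hs⟩ :=
    iter_invariant hq2 hqe hmem hb hS hH m χ r hA (m - 1) le_rfl
  rw [hsum, Nat.sub_add_cancel (by omega)] at hd
  obtain rfl : d = 0 := by omega
  have hsmall : SmallSeq 0 F := by
    apply hs
    by_contra hc
    push Not at hc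
    refine hnD ⟨⟨hA, hsum⟩, fun p h1 h2 => ?_⟩
    have := hc p h1 h2
    tauto
  have heq : ∀ n, scalarOf (iterArc q (f n (χ 1))
      ((List.range (m - 1)).map fun k => (r (k + 1), f n (χ (k + 2))))) = F n (fun _ => 0) := by
    intro n
    rw [hit n]
    rfl
  simp only [heq]
  rw [tendsto_zero_iff_enorm_tendsto_zero]
  exact hsmall.congr fun n => eLpNorm_zero_dim _

end
end
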